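/- Let J be a Jordan algebra over a field K of characteristic zero. Then J is semisimple (i.e., J contains no nonzero nilpotent ideal) if and only if there exist a finite-dimensional vector space V and a representation π : J → End(V) of J such that the bilinear form B(x, y) = tr(π(xy)) on J is nondegenerate. -/

import Mathlib

variable (K : Type*) [Field K] [CharZero K]
variable (J : Type*) [NonUnitalNonAssocCommRing J] [Module K J]
  [SMulCommClass K J J] [IsScalarTower K J J] [FiniteDimensional K J]

/-- The series `I⁽ᵏ⁾` of a subspace `I` (shifted by one): `iser K J I n = I⁽ⁿ⁺¹⁾`, where
`I⁽¹⁾ = I` and `I⁽ᵏ⁾ = span {I⁽ⁱ⁾ · I⁽ʲ⁾ : i + j = k}`. -/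
def iser (I : Submodule K J) : ℕ → Submodule K J
  | 0 => I
  | n + 1 =>
      ⨆ p : Fin (n + 1),
        Submodule.span K
          {z : J | ∃ x ∈ iser I p.1, ∃ y ∈ iser I (n - p.1), z = x * y}
  termination_by n => n
  decreasing_by
  · exact p.isLt
  · omega

/-- A sequence of commuting elements satisfying the recurrence of the multiplication operators of
powers, and which eventually vanishes, has a nilpotent initial term. -/
theorem isNilpotent_of_jordan_recurrence (k : Type*) [Field k] [CharZero k] {R : Type*} [Ring R]
    [Algebra k R] {P : ℕ → R} {c : R}
    (hc : ∀ i, Commute c (P i)) (h1 : P 1 = c + 2 • (P 0 * P 0))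
    (hrec : ∀ i, P (i + 2) = 2 • (P 0 * P (i + 1)) + c * P i)
    {M : ℕ} (hM : ∀ i, M ≤ i → P i = 0) : IsNilpotent (P 0) := by
  have hcP : ∀ j i, M ≤ i + j → c ^ j * P i = 0 := by
    intro j
    induction j with
    | zero => intro i hk; simp [hM i hk]
    | succ j ih =>
      intro i hk
      have h2 : c * P i = P (i + 2) - 2 • (P 0 * P (i + 1)) := by rw [hrec]; abel
      have h3 : c ^ j * (P 0 * P (i + 1)) = 0 := by
        rw [← mul_assoc, ((hc 0).pow_left j).eq, mul_assoc, ih _ (by omega), mul_zero]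
      rw [pow_succ, mul_assoc, h2, mul_sub, ih _ (by omega), mul_smul_comm, h3]
      simp
  have hcn : IsNilpotent c := by
    refine ⟨M + 1, ?_⟩
    have h2 : c = P 1 - 2 • (P 0 * P 0) := by rw [h1]; abel
    calc c ^ (M + 1) = c ^ M * (P 1 - 2 • (P 0 * P 0)) := by rw [pow_succ, ← h2]
      _ = 0 := by
        rw [mul_sub, mul_smul_comm, ← mul_assoc, hcP M 1 (by omega), hcP M 0 (by omega)]
        simp
  have hpow : ∀ i, (∃ e, Commute c e ∧ P i = (2 : k) ^ i • P 0 ^ (i + 1) + c * e) ∧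
      ∃ e, Commute c e ∧ P (i + 1) = (2 : k) ^ (i + 1) • P 0 ^ (i + 2) + c * e := by
    intro i
    induction i with
    | zero =>
      refine ⟨⟨0, Commute.zero_right c, by simp⟩, 1, Commute.one_right c, ?_⟩
      rw [h1, ← Nat.cast_smul_eq_nsmul k, zero_add, zero_add, pow_one, pow_two]
      simp [add_comm]
    | succ i ih =>
      refine ⟨ih.2, ?_⟩
      obtain ⟨e, he, hPe⟩ := ih.2
      refine ⟨2 • (P 0 * e) + P i,
        ((((hc 0).mul_right he).smul_right 2).add_right (hc i)), ?_⟩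
      have h3 : P 0 * (c * e) = c * (P 0 * e) := by
        rw [← mul_assoc, ← (hc 0).eq, mul_assoc]
      rw [hrec, hPe, mul_add, h3, mul_smul_comm, ← pow_succ', mul_add, mul_smul_comm,
        ← Nat.cast_smul_eq_nsmul k]
      push_cast
      module
  obtain ⟨e, he, hPe⟩ := (hpow M).1
  have h4 : P 0 ^ (M + 1) = -(((2 : k) ^ M)⁻¹ • (c * e)) := by
    have h5 : (2 : k) ^ M • P 0 ^ (M + 1) = -(c * e) := by
      rw [hM M le_rfl] at hPe
      exact eq_neg_of_add_eq_zero_left hPe.symm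
    rw [← smul_neg, ← h5, smul_smul, inv_mul_cancel₀ (pow_ne_zero _ two_ne_zero), one_smul]
  have h6 : IsNilpotent (P 0 ^ (M + 1)) := by
    rw [h4]
    exact ((he.isNilpotent_mul_right hcn).smul _).neg
  exact h6.of_pow

/-- An endomorphism of a finite-dimensional space has a power divisible, among the polynomials in
it, by a higher power. -/
theorem exists_pow_eq_pow_succ_mul_aeval {k V : Type*} [Field k] [AddCommGroup V] [Module k V]
    [FiniteDimensional k V] (T : Module.End k V) :
    ∃ (m : ℕ) (g : Polynomial k), T ^ m = T ^ (m + 1) * Polynomial.aeval T g := by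
  have hne : minpoly k T ≠ 0 := minpoly.ne_zero (Algebra.IsIntegral.isIntegral T)
  obtain ⟨h, hh, hdvd⟩ := Polynomial.exists_eq_pow_rootMultiplicity_mul_and_not_dvd _ hne 0
  rw [map_zero, sub_zero, Polynomial.X_dvd_iff] at hdvd
  rw [map_zero, sub_zero] at hh
  set m := Polynomial.rootMultiplicity 0 (minpoly k T)
  refine ⟨m, -((h.coeff 0)⁻¹ • h.divX), ?_⟩
  have h0 := minpoly.aeval k T
  rw [hh, ← Polynomial.X_mul_divX_add h] at h0
  simp only [map_mul, map_add, map_pow, Polynomial.aeval_X, Polynomial.aeval_C, mul_add,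
    ← mul_assoc, ← pow_succ, Algebra.algebraMap_eq_smul_one, mul_smul_comm, mul_one] at h0
  rw [map_neg, map_smul, mul_neg, mul_smul_comm, eq_neg_of_add_eq_zero_left h0, smul_neg, neg_neg,
    smul_smul, inv_mul_cancel₀ hdvd, one_smul]

/-- The power `x ^ (i + 1)`, bracketed to the right. -/
def jpow {A : Type*} [Mul A] (x : A) : ℕ → A
  | 0 => x
  | i + 1 => x * jpow x i

theorem mul_pow_apply_self (k : Type*) [Field k] {A : Type*} [NonUnitalNonAssocCommRing A]
    [Module k A] [SMulCommClass k A A] [IsScalarTower k A A] (x : A) (i : ℕ) :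
    (LinearMap.mul k A x ^ i) x = jpow x i := by
  induction i with
  | zero => rfl
  | succ i ih => rw [pow_succ', Module.End.mul_apply, ih]; rfl

section JordanAlgebra

variable {k : Type*} [Field k] {A : Type*} [NonUnitalNonAssocCommRing A] [IsCommJordan A]
  [Module k A]

theorem sq_mul_jpow {A : Type*} [NonUnitalNonAssocCommRing A] [IsCommJordan A] (x : A) (i : ℕ) :
    (x * x) * jpow x i = jpow x (i + 2) := by
  induction i with
  | zero => exact mul_comm _ _
  | succ i ih =>
    rw [mul_comm, jpow, IsCommJordan.lmul_comm_rmul_rmul, mul_comm (jpow x i), ih]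
    rfl

/-- The identities of a representation of a Jordan algebra. -/
structure IsJordanRep {V : Type*} [AddCommGroup V] [Module k V]
    (π : A →ₗ[k] Module.End k V) : Prop where
  commute_sq : ∀ x : A, π (x * x) * π x = π x * π (x * x)
  quadratic : ∀ x y : A,
    2 • (π (x * y) * π x) + π (x * x) * π y - 2 • (π x * (π y * π x)) - π ((x * x) * y) = 0

namespace IsJordanRep

variable {V : Type*} [AddCommGroup V] [Module k V] {π : A →ₗ[k] Module.End k V}

theorem map_jpow_add_two (hπ : IsJordanRep π) (x : A) (i : ℕ) :
    π (jpow x (i + 2)) = 2 • (π (jpow x (i + 1)) * π x) + π (x * x) * π (jpow x i) -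
      2 • (π x * (π (jpow x i) * π x)) := by
  have h := hπ.quadratic x (jpow x i)
  rw [sq_mul_jpow, sub_eq_zero] at h
  exact h.symm

theorem commute_map_jpow (hπ : IsJordanRep π) (x : A) {c : Module.End k V}
    (h0 : Commute c (π x)) (h1 : Commute c (π (x * x))) (i : ℕ) :
    Commute c (π (jpow x i)) := by
  suffices Commute c (π (jpow x i)) ∧ Commute c (π (jpow x (i + 1))) from this.1
  induction i with
  | zero => exact ⟨h0, h1⟩
  | succ i ih =>
    refine ⟨ih.2, ?_⟩
    rw [hπ.map_jpow_add_two]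
    exact (((ih.2.mul_right h0).smul_right 2).add_right (h1.mul_right ih.1)).sub_right
      ((h0.mul_right (ih.1.mul_right h0)).smul_right 2)

/-- A representation sends nilpotent elements to nilpotent operators. -/
theorem isNilpotent_map [CharZero k] (hπ : IsJordanRep π) {x : A} {n : ℕ}
    (hx : jpow x n = 0) : IsNilpotent (π x) := by
  have hzero : ∀ i, n ≤ i → jpow x i = 0 := by
    intro i hi
    induction i, hi using Nat.le_induction with
    | base => exact hx
    | succ i _ ih => rw [jpow, ih, mul_zero]
  have hxx : Commute (π x) (π (x * x)) := (hπ.commute_sq x).symm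
  have hcomm := hπ.commute_map_jpow x (Commute.refl (π x)) hxx
  have hcomm' := hπ.commute_map_jpow x hxx.symm (Commute.refl (π (x * x)))
  refine isNilpotent_of_jordan_recurrence k (P := fun i ↦ π (jpow x i))
    (c := π (x * x) - 2 • (π x * π x)) (M := n) (fun i ↦ ?_) ?_ (fun i ↦ ?_) (fun i hi ↦ ?_)
  · exact (hcomm' i).sub_left (((hcomm i).mul_left (hcomm i)).smul_left 2)
  · simp [jpow]
  · have h : π (jpow x i) * π x = π x * π (jpow x i) := (hcomm i).eq.symm
    change π (jpow x (i + 2)) = 2 • (π x * π (jpow x (i + 1))) +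
      (π (x * x) - 2 • (π x * π x)) * π (jpow x i)
    rw [hπ.map_jpow_add_two, ← (hcomm (i + 1)).eq, h, sub_mul, smul_mul_assoc, mul_assoc]
    abel
  · simp [hzero i hi]

theorem trace_map_eq_zero [CharZero k] (hπ : IsJordanRep π) {x : A} {n : ℕ}
    (hx : jpow x n = 0) : LinearMap.trace k V (π x) = 0 :=
  (LinearMap.isNilpotent_trace_of_isNilpotent (hπ.isNilpotent_map hx)).eq_zero

end IsJordanRep

section MulOperators

variable [SMulCommClass k A A] [IsScalarTower k A A]

local notation "L" => LinearMap.mul k A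

theorem jordan_linearized (k : Type*) [Field k] [CharZero k]
    {A : Type*} [NonUnitalNonAssocCommRing A] [IsCommJordan A] [Module k A] (x y z : A) :
    (x * y) * (x * z) + (x * y) * (x * z) + (x * x) * (y * z) =
      x * (y * (x * z)) + x * (y * (x * z)) + ((x * x) * y) * z := by
  have h1 := IsCommJordan.lmul_comm_rmul_rmul (x + z) y
  have h2 := IsCommJordan.lmul_comm_rmul_rmul (x - z) y
  have h3 := IsCommJordan.lmul_comm_rmul_rmul z y
  simp only [mul_add, add_mul, mul_sub, sub_mul, mul_comm z x, mul_comm z y] at h1 h2 h3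
  rw [mul_comm (x * x) (y * z), mul_comm (x * x) y, mul_comm (y * (x * x)) z]
  linear_combination (norm := module) (1 / 2 : k) • h1 - (1 / 2 : k) • h2 - h3

/-- The regular representation. -/
theorem isJordanRep_mul [CharZero k] : IsJordanRep L where
  commute_sq x := by
    ext y
    simp only [Module.End.mul_apply, LinearMap.mul_apply']
    rw [mul_comm, IsCommJordan.lmul_comm_rmul_rmul, mul_comm y]
  quadratic x y := by
    ext z
    have h := jordan_linearized k x y z
    simp only [LinearMap.sub_apply, LinearMap.add_apply,
      Module.End.mul_apply, LinearMap.mul_apply', LinearMap.zero_apply, two_smul]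
    rw [h]
    abel

variable [CharZero k]

/-- The double commutator of multiplication operators is a multiplication operator. -/
theorem lie_lie_mul (x w y : A) :
    L x * (L w * L y - L y * L w) - (L w * L y - L y * L w) * L x =
      L ((x * w) * y - (x * y) * w) := by
  have key (a b c : A) : L (a * b) * L c + L (a * c) * L b + L (b * c) * L a =
      L a * (L c * L b) + L b * (L c * L a) + L ((a * b) * c) := by
    have h1 := (isJordanRep_mul (k := k) (A := A)).quadratic (a + b) c
    have h2 := (isJordanRep_mul (k := k) (A := A)).quadratic (a - b) c
    simp only [map_add, map_sub, mul_add, add_mul, mul_sub, sub_mul, mul_comm b a] at h1 h2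
    linear_combination (norm := module) (1 / 4 : k) • h1 - (1 / 4 : k) • h2
  have h1 := key x w y
  have h2 := key x y w
  rw [mul_comm y w] at h2
  simp only [map_sub, mul_sub, sub_mul, mul_assoc] at h1 h2 ⊢
  linear_combination (norm := module) (1 : k) • h1 - (1 : k) • h2

theorem trace_mul_assoc (x w y : A) :
    LinearMap.trace k A (L ((x * w) * y)) = LinearMap.trace k A (L ((x * y) * w)) := by
  have h := congrArg (LinearMap.trace k A) (lie_lie_mul x w y)
  rw [map_sub (LinearMap.trace k A), LinearMap.trace_mul_comm, sub_self, map_sub, map_sub] at h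
  exact sub_eq_zero.mp h.symm

variable (k) in
/-- The polynomials in `x` without constant term multiply associatively. -/
theorem aeval_mul_apply_mul_aeval_mul_apply (x : A) (p q : Polynomial k) :
    Polynomial.aeval (L x) p x * Polynomial.aeval (L x) q x =
      Polynomial.aeval (L x) (Polynomial.X * p * q) x := by
  have hcomm : Commute (L x) (L (Polynomial.aeval (L x) p x)) := by
    induction p using Polynomial.induction_on' with
    | add p q hp hq => simpa using hp.add_right hq
    | monomial i a =>
      have h := (isJordanRep_mul (k := k) (A := A)).commute_map_jpow x (Commute.refl (L x))
        ((isJordanRep_mul (k := k) (A := A)).commute_sq x).symm i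
      simpa [Polynomial.aeval_monomial, mul_pow_apply_self] using (h.smul_right a)
  have hq : Commute (Polynomial.aeval (L x) q) (L (Polynomial.aeval (L x) p x)) := by
    induction q using Polynomial.induction_on' with
    | add q r hq hr => simpa using hq.add_left hr
    | monomial i a =>
      rw [← Polynomial.smul_X_eq_monomial, map_smul, map_pow, Polynomial.aeval_X]
      exact (hcomm.pow_left i).smul_left a
  calc Polynomial.aeval (L x) p x * Polynomial.aeval (L x) q x
      = (Polynomial.aeval (L x) q * L (Polynomial.aeval (L x) p x)) x := by rw [hq.eq]; rfl
    _ = Polynomial.aeval (L x) (Polynomial.X * p * q) x := by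
      rw [mul_comm _ q, map_mul, map_mul, Polynomial.aeval_X]
      simp [mul_comm x]

/-- An idempotent whose multiplication operator is traceless vanishes. -/
theorem eq_zero_of_trace_mul_eq_zero [FiniteDimensional k A] {e : A} (he : e * e = e)
    (htr : LinearMap.trace k A (L e) = 0) : e = 0 := by
  set T := L e with hT
  have hcub : T * T * T = (3 / 2 : k) • (T * T) - (1 / 2 : k) • T := by
    have h := (isJordanRep_mul (k := k) (A := A)).quadratic e e
    simp only [he, ← mul_assoc, ← hT] at h
    linear_combination (norm := module) (-1 / 2 : k) • h
  have hP : IsIdempotentElem ((2 : k) • (T * T) - T) := by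
    simp only [IsIdempotentElem, sub_mul, mul_sub, smul_mul_assoc, mul_smul_comm, ← mul_assoc,
      hcub]
    module
  have hQ : IsIdempotentElem ((4 : k) • T - (4 : k) • (T * T)) := by
    simp only [IsIdempotentElem, sub_mul, mul_sub, smul_mul_assoc, mul_smul_comm, ← mul_assoc,
      hcub]
    module
  have htrP := (LinearMap.IsIdempotentElem.isProj_range _ hP).trace
  have htrQ := (LinearMap.IsIdempotentElem.isProj_range _ hQ).trace
  have hsum : (2 : k) • ((2 : k) • (T * T) - T) + ((4 : k) • T - (4 : k) • (T * T)) =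
      (2 : k) • T := by module
  have htrsum := congrArg (LinearMap.trace k A) hsum
  rw [map_add, map_smul, map_smul, htr, htrP, htrQ, smul_zero, smul_eq_mul] at htrsum
  have hP0 : (2 : k) • (T * T) - T = 0 := by
    rw [← LinearMap.IsIdempotentElem.trace_eq_zero_iff hP, htrP]
    norm_cast at htrsum ⊢
    omega
  have h := LinearMap.congr_fun hP0 e
  simpa [hT, he, two_smul] using h

/-- If the trace form vanishes on an ideal, then the ideal consists of elements with nilpotent
multiplication operators. -/
theorem isNilpotent_mul_of_trace_eq_zero [FiniteDimensional k A] {I : Submodule k A}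
    (hI : ∀ x : A, ∀ y ∈ I, x * y ∈ I)
    (htr : ∀ x ∈ I, ∀ y, LinearMap.trace k A (L (x * y)) = 0) {x : A} (hx : x ∈ I) :
    IsNilpotent (L x) := by
  obtain ⟨m, g, hg⟩ := exists_pow_eq_pow_succ_mul_aeval (L x)
  set T := L x with hT
  set G := Polynomial.aeval T g with hG
  have hTG : Commute T G := by
    have := (Commute.all Polynomial.X g).map (Polynomial.aeval T)
    rwa [Polynomial.aeval_X] at this
  have hpow (i : ℕ) : T ^ m = T ^ (m + i) * G ^ i := by
    induction i with
    | zero => simp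
    | succ i ih =>
      calc T ^ m = T ^ (m + 1) * G := hg
        _ = T * T ^ m * G := by rw [pow_succ']
        _ = T * (T ^ (m + i) * G ^ i) * G := by rw [← ih]
        _ = T ^ (m + (i + 1)) * G ^ (i + 1) := by
          rw [← mul_assoc, ← pow_succ', mul_assoc, ← pow_succ, add_assoc]
  set e := Polynomial.aeval T (Polynomial.X ^ m * g ^ (m + 1)) x with he
  have he_apply : e = (T ^ m * G ^ (m + 1)) x := by
    rw [he, map_mul, map_pow, map_pow, Polynomial.aeval_X]
  have hee : e * e = e := by
    rw [he, hT, aeval_mul_apply_mul_aeval_mul_apply, ← hT, ← he, he_apply]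
    congr 1
    have hp : Polynomial.X * (Polynomial.X ^ m * g ^ (m + 1)) * (Polynomial.X ^ m * g ^ (m + 1)) =
      Polynomial.X ^ (m + (m + 1)) * g ^ (m + 1) * g ^ (m + 1) := by ring
    rw [hp, map_mul, map_mul, map_pow, map_pow, Polynomial.aeval_X, ← hG, ← hpow]
  have heI : e ∈ I := Polynomial.aeval_apply_smul_mem_of_le_comap hx _ T (fun y hy ↦ hI x y hy)
  have he0 : e = 0 := eq_zero_of_trace_mul_eq_zero (k := k) hee (by
    simpa only [hee] using htr e heI e)
  have hx0 : jpow x m = 0 := by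
    rw [← mul_pow_apply_self k, ← hT, hpow (m + 1), add_comm m (m + 1), pow_add, mul_assoc,
      Module.End.mul_apply, ← he_apply, he0, map_zero]
  exact (isJordanRep_mul (k := k) (A := A)).isNilpotent_map hx0

end MulOperators

end JordanAlgebra

section LieTripleSystem

attribute [local instance] LieRing.ofAssociativeRing

/-- If the trace form of a Lie module vanishes and every element of the Lie algebra is congruent
modulo the derived algebra to one acting nilpotently, then the module is nilpotent. -/
theorem LieModule.isNilpotent_of_traceForm_eq_zero {k L M : Type*} [Field k] [CharZero k]
    [LieRing L] [LieAlgebra k L] [AddCommGroup M] [Module k M] [LieRingModule L M]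
    [LieModule k L M] [FiniteDimensional k M] (htr : LieModule.traceForm k L M = 0)
    (hnil : ∀ x : L, ∃ y : L, x - y ∈ LieAlgebra.derivedSeries k L 1 ∧
      _root_.IsNilpotent (LieModule.toEnd k L M y)) :
    LieModule.IsNilpotent L M := by
  rw [LieModule.isNilpotent_iff_forall' (R := k)]
  intro x
  obtain ⟨y, hxy, m, hm⟩ := hnil x
  set D := LieAlgebra.derivedSeries k L 1
  set X := LieModule.toEnd k L M x
  set Y := LieModule.toEnd k L M y
  obtain ⟨n, hn⟩ := (LieModule.isNilpotent_iff k D M).mp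
    (LieModule.isNilpotent_derivedSeries_of_traceForm_eq_zero htr)
  have hDn : D.lcs M n = ⊥ := by
    rw [← LieSubmodule.toSubmodule_inj, LieIdeal.coe_lcs_eq, hn]
    rfl
  have hcongr (i j : ℕ) : ∀ v ∈ D.lcs M i,
      (X ^ j) v ∈ D.lcs M i ∧ (X ^ j) v - (Y ^ j) v ∈ D.lcs M (i + 1) := by
    intro v hv
    induction j with
    | zero => simpa using hv
    | succ j ih =>
      have hX : (X ^ (j + 1)) v = ⁅x, (X ^ j) v⁆ := by rw [pow_succ']; rfl
      have hY : (Y ^ (j + 1)) v = ⁅y, (Y ^ j) v⁆ := by rw [pow_succ']; rfl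
      refine ⟨hX ▸ LieSubmodule.lie_mem _ ih.1, ?_⟩
      have h : ⁅x, (X ^ j) v⁆ - ⁅y, (Y ^ j) v⁆ =
          ⁅x - y, (X ^ j) v⁆ + ⁅y, (X ^ j) v - (Y ^ j) v⁆ := by
        rw [sub_lie, lie_sub]; abel
      rw [hX, hY, h]
      refine add_mem ?_ (LieSubmodule.lie_mem _ ih.2)
      rw [LieIdeal.lcs_succ]
      exact LieSubmodule.lie_mem_lie hxy ih.1
  have hstep (i : ℕ) : ∀ v, (X ^ (m * i)) v ∈ D.lcs M i := by
    induction i with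
    | zero => intro v; simp
    | succ i ih =>
      intro v
      have h := (hcongr i m _ (ih v)).2
      rw [hm, LinearMap.zero_apply, sub_zero, ← Module.End.mul_apply, ← pow_add] at h
      rwa [mul_add, mul_one, add_comm (m * i)]
  refine ⟨m * n, LinearMap.ext fun v ↦ ?_⟩
  have h := hstep n v
  rwa [hDn, LieSubmodule.mem_bot] at h

variable {k V : Type*} [Field k] [AddCommGroup V] [Module k V]

/-- The diagonal action of an endomorphism on the doubled space. -/
def doubledEnd (k V : Type*) [Field k] [AddCommGroup V] [Module k V] :
    Module.End k V →ₐ[k] Module.End k (V × V) :=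
  (LinearMap.prodMapAlgHom k V V).comp (AlgHom.prod (AlgHom.id k _) (AlgHom.id k _))

/-- The exchange of the two summands of the doubled space. -/
def doubledSwap (k V : Type*) [Field k] [AddCommGroup V] [Module k V] : Module.End k (V × V) :=
  (LinearMap.snd k V V).prod (LinearMap.fst k V V)

theorem doubledEnd_apply (f : Module.End k V) (v : V × V) :
    doubledEnd k V f v = (f v.1, f v.2) := rfl

theorem doubledSwap_apply (v : V × V) : doubledSwap k V v = (v.2, v.1) := rfl

theorem doubledSwap_mul_self : doubledSwap k V * doubledSwap k V = 1 := rfl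

theorem doubledEnd_mul_doubledSwap (f : Module.End k V) :
    doubledEnd k V f * doubledSwap k V = doubledSwap k V * doubledEnd k V f := rfl

theorem trace_doubledEnd [FiniteDimensional k V] (f : Module.End k V) :
    LinearMap.trace k _ (doubledEnd k V f) = 2 * LinearMap.trace k V f := by
  rw [two_mul]
  exact LinearMap.trace_prodMap' f f

theorem trace_doubledSwap_mul_doubledEnd [CharZero k] [FiniteDimensional k V]
    (f : Module.End k V) :
    LinearMap.trace k _ (doubledSwap k V * doubledEnd k V f) = 0 := by
  set s : Module.End k (V × V) := LinearMap.prodMap 1 (-1)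
  have h : s * (doubledSwap k V * doubledEnd k V f) * s =
      -(doubledSwap k V * doubledEnd k V f) := by
    refine LinearMap.ext fun v ↦ ?_
    simp [s, doubledSwap_apply, doubledEnd_apply]
  have hs : s * s = 1 := by
    refine LinearMap.ext fun v ↦ ?_
    simp [s]
  have h2 := congrArg (LinearMap.trace k _) h
  rw [LinearMap.trace_mul_comm, ← mul_assoc, hs, one_mul, map_neg] at h2
  exact self_eq_neg.mp h2

/-- A finite-dimensional space of nilpotent endomorphisms closed under the Lie triple product is
nilpotent. -/
theorem exists_pow_eq_bot_of_lieTriple [CharZero k] [FiniteDimensional k V]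
    {p : Submodule k (Module.End k V)} (hnil : ∀ a ∈ p, IsNilpotent a)
    (hp : ∀ a ∈ p, ∀ b ∈ p, ∀ c ∈ p, ⁅a, ⁅b, c⁆⁆ ∈ p) : ∃ n, p ^ n = ⊥ := by
  set D : Submodule k (Module.End k V) := Submodule.span k {d | ∃ a ∈ p, ∃ b ∈ p, ⁅a, b⁆ = d}
  have hpD : ∀ a ∈ p, ∀ d ∈ D, ⁅a, d⁆ ∈ p := by
    intro a ha d hd
    induction hd using Submodule.span_induction with
    | mem d hd => obtain ⟨b, hb, c, hc, rfl⟩ := hd; exact hp a ha b hb c hc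
    | zero => rw [lie_zero]; exact zero_mem p
    | add d e _ _ hd he => rw [lie_add]; exact add_mem hd he
    | smul t d _ hd => rw [lie_smul]; exact p.smul_mem t hd
  have hDp : ∀ d ∈ D, ∀ a ∈ p, ⁅d, a⁆ ∈ p := by
    intro d hd a ha
    rw [← lie_skew]
    exact neg_mem (hpD a ha d hd)
  have hpp : ∀ a ∈ p, ∀ b ∈ p, ⁅a, b⁆ ∈ D :=
    fun a ha b hb ↦ Submodule.subset_span ⟨a, ha, b, hb, rfl⟩
  have hDD : ∀ d ∈ D, ∀ e ∈ D, ⁅d, e⁆ ∈ D := by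
    intro d hd e he
    induction he using Submodule.span_induction with
    | mem e he =>
      obtain ⟨b, hb, c, hc, rfl⟩ := he
      rw [leibniz_lie]
      exact add_mem (hpp _ (hDp d hd b hb) _ hc) (hpp _ hb _ (hDp d hd c hc))
    | zero => rw [lie_zero]; exact zero_mem D
    | add e f _ _ he hf => rw [lie_add]; exact add_mem he hf
    | smul t e _ he => rw [lie_smul]; exact D.smul_mem t he
  have htrp : ∀ a ∈ p, ∀ b ∈ p, LinearMap.trace k V (a * b) = 0 := by
    have hsq : ∀ a ∈ p, LinearMap.trace k V (a * a) = 0 := fun a ha ↦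
      (LinearMap.isNilpotent_trace_of_isNilpotent
        ((Commute.refl a).isNilpotent_mul_right (hnil a ha))).eq_zero
    intro a ha b hb
    have h := hsq (a + b) (add_mem ha hb)
    rw [mul_add, add_mul, add_mul, map_add, map_add, map_add, hsq a ha, hsq b hb,
      LinearMap.trace_mul_comm k b a, zero_add, add_zero] at h
    exact add_self_eq_zero.mp h
  have htrD : ∀ d ∈ D, ∀ e ∈ D, LinearMap.trace k V (d * e) = 0 := by
    intro d hd e he
    induction he using Submodule.span_induction with
    | mem e he =>
      obtain ⟨b, hb, c, hc, rfl⟩ := he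
      have h := htrp _ (hDp d hd b hb) c hc
      rw [Ring.lie_def, sub_mul, map_sub, sub_eq_zero] at h
      rw [Ring.lie_def, mul_sub, map_sub, sub_eq_zero, ← mul_assoc, h, mul_assoc,
        LinearMap.trace_mul_comm, mul_assoc]
    | zero => simp
    | add e f _ _ he hf => rw [mul_add, map_add, he, hf, add_zero]
    | smul t e _ he => rw [mul_smul_comm, map_smul, he, smul_zero]
  let σ := doubledSwap k V
  let δ := doubledEnd k V
  have hσσ : σ * σ = 1 := doubledSwap_mul_self
  have hδσ (f : Module.End k V) : δ f * σ = σ * δ f := doubledEnd_mul_doubledSwap f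
  have hmul (a b d e : Module.End k V) :
      (σ * δ a + δ d) * (σ * δ b + δ e) = σ * δ (a * e + d * b) + δ (a * b + d * e) := by
    have h1 : σ * δ a * (σ * δ b) = δ a * δ b := by
      rw [mul_assoc, ← mul_assoc (δ a), hδσ, ← mul_assoc, ← mul_assoc, hσσ, one_mul]
    have h2 : δ d * (σ * δ b) = σ * (δ d * δ b) := by rw [← mul_assoc, hδσ, mul_assoc]
    simp only [map_add, map_mul, add_mul, mul_add, h1, h2, mul_assoc]
    abel
  have hlie (a b d e : Module.End k V) :
      ⁅σ * δ a + δ d, σ * δ b + δ e⁆ = σ * δ (⁅a, e⁆ + ⁅d, b⁆) + δ (⁅a, b⁆ + ⁅d, e⁆) := by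
    simp only [Ring.lie_def, hmul, map_add, map_sub, mul_add, mul_sub]
    abel
  let g : LieSubalgebra k (Module.End k (V × V)) :=
    { p.map ((LinearMap.mulLeft k σ).comp δ.toLinearMap) ⊔ D.map δ.toLinearMap with
      lie_mem' := by
        intro x y hx hy
        obtain ⟨_, ⟨a, ha, rfl⟩, _, ⟨d, hd, rfl⟩, rfl⟩ := Submodule.mem_sup.mp hx
        obtain ⟨_, ⟨b, hb, rfl⟩, _, ⟨e, he, rfl⟩, rfl⟩ := Submodule.mem_sup.mp hy
        change ⁅σ * δ a + δ d, σ * δ b + δ e⁆ ∈ _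
        rw [hlie]
        exact Submodule.add_mem_sup
          ⟨_, add_mem (hpD a ha e he) (hDp d hd b hb), rfl⟩
          ⟨_, add_mem (hpp a ha b hb) (hDD d hd e he), rfl⟩ }
  have hg (x : g) : ∃ a ∈ p, ∃ d ∈ D, (x : Module.End k (V × V)) = σ * δ a + δ d := by
    obtain ⟨_, ⟨a, ha, rfl⟩, _, ⟨d, hd, rfl⟩, h⟩ := Submodule.mem_sup.mp x.2
    exact ⟨a, ha, d, hd, h.symm⟩
  have hσg : ∀ a ∈ p, σ * δ a ∈ g := fun a ha ↦ Submodule.mem_sup_left ⟨a, ha, rfl⟩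
  have hδg : ∀ d ∈ D, δ d ∈ g := fun d hd ↦ Submodule.mem_sup_right ⟨d, hd, rfl⟩
  have htr : LieModule.traceForm k g (V × V) = 0 := by
    ext x y
    obtain ⟨a, ha, d, hd, hx⟩ := hg x
    obtain ⟨b, hb, e, he, hy⟩ := hg y
    change LinearMap.trace k _ ((x : Module.End k (V × V)) * (y : Module.End k (V × V))) = 0
    rw [hx, hy, hmul, map_add, trace_doubledSwap_mul_doubledEnd, trace_doubledEnd, map_add,
      htrp a ha b hb, htrD d hd e he]
    simp
  have hder : ∀ d, ∀ hd : d ∈ D,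
      (⟨δ d, hδg d hd⟩ : g) ∈ LieAlgebra.derivedSeries k g 1 := by
    intro d hd
    induction hd using Submodule.span_induction with
    | mem d hd =>
      obtain ⟨a, ha, b, hb, rfl⟩ := hd
      have h : (⟨δ ⁅a, b⁆, hδg _ (hpp a ha b hb)⟩ : g) =
          ⁅(⟨σ * δ a, hσg a ha⟩ : g), (⟨σ * δ b, hσg b hb⟩ : g)⁆ := by
        refine Subtype.ext ?_
        have := hlie a b 0 0
        simp only [map_zero, add_zero, lie_zero, zero_lie, mul_zero, zero_add] at this
        exact this.symm
      rw [h]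
      exact LieSubmodule.lie_mem_lie (LieSubmodule.mem_top _) (LieSubmodule.mem_top _)
    | zero => convert zero_mem (LieAlgebra.derivedSeries k g 1); exact map_zero δ
    | add d e hd he hd' he' => convert add_mem hd' he'; exact map_add δ d e
    | smul t d hd hd' => convert SMulMemClass.smul_mem t hd'; exact map_smul δ t d
  have hnilg : LieModule.IsNilpotent g (V × V) := by
    refine LieModule.isNilpotent_of_traceForm_eq_zero htr fun x ↦ ?_
    obtain ⟨a, ha, d, hd, hx⟩ := hg x
    refine ⟨⟨σ * δ a, hσg a ha⟩, ?_, ?_⟩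
    · have h : x - ⟨σ * δ a, hσg a ha⟩ = ⟨δ d, hδg d hd⟩ := Subtype.ext (sub_eq_of_eq_add' hx)
      rw [h]
      exact hder d hd
    · have hc : Commute σ (δ a) := (hδσ a).symm
      exact hc.isNilpotent_mul_left ((hnil a ha).map δ)
  obtain ⟨n, hn⟩ := (LieModule.isNilpotent_iff k g (V × V)).mp hnilg
  have hlcs (i : ℕ) : ∀ w ∈ p ^ i, ∀ v, δ w v ∈ LieModule.lowerCentralSeries k g (V × V) i := by
    induction i with
    | zero => intro w _ v; simp
    | succ i ih =>
      intro w hw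
      rw [pow_succ'] at hw
      induction hw using Submodule.mul_induction_on' with
      | mem_mul_mem a ha w hw =>
        intro v
        have h : δ (a * w) v = ⁅(⟨σ * δ a, hσg a ha⟩ : g), δ w (σ v)⁆ := rfl
        rw [h, LieModule.lowerCentralSeries_succ]
        exact LieSubmodule.lie_mem_lie (LieSubmodule.mem_top _) (ih w hw _)
      | add w _ w' _ h h' =>
        intro v
        rw [map_add, LinearMap.add_apply]
        exact add_mem (h v) (h' v)
  refine ⟨n, (Submodule.eq_bot_iff _).mpr fun w hw ↦ LinearMap.ext fun v ↦ ?_⟩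
  have h := hlcs n w hw (v, v)
  rw [hn, LieSubmodule.mem_bot] at h
  exact congrArg Prod.fst h

end LieTripleSystem

section Nilpotency

variable {k : Type*} [Field k] {A : Type*} [NonUnitalNonAssocCommRing A] [Module k A]

theorem jpow_mem_iser {I : Submodule k A} {x : A} (hx : x ∈ I) (n : ℕ) :
    jpow x n ∈ iser k A I n := by
  induction n with
  | zero => rw [iser]; exact hx
  | succ n ih =>
    rw [iser]
    refine Submodule.mem_iSup_of_mem (0 : Fin (n + 1)) (Submodule.subset_span ⟨x, ?_, _, ih, rfl⟩)
    rw [Fin.val_zero, iser]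
    exact hx

theorem iser_le_self {I : Submodule k A} (hI : ∀ x : A, ∀ y ∈ I, x * y ∈ I) (n : ℕ) :
    iser k A I n ≤ I := by
  induction n using Nat.strong_induction_on with
  | _ n ih =>
    cases n with
    | zero => rw [iser]
    | succ n =>
      rw [iser]
      refine iSup_le fun i ↦ Submodule.span_le.mpr ?_
      rintro _ ⟨x, -, y, hy, rfl⟩
      exact hI x y (ih _ (by omega) hy)

variable [SMulCommClass k A A] [IsScalarTower k A A]

/-- An ideal is nilpotent as soon as its multiplication operators generate a nilpotent algebra. -/
theorem exists_iser_eq_bot {I : Submodule k A} (hI : ∀ x : A, ∀ y ∈ I, x * y ∈ I) {n : ℕ}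
    (hn : I.map (LinearMap.mul k A) ^ n = ⊥) : ∃ m, iser k A I m = ⊥ := by
  set p := I.map (LinearMap.mul k A) with hp
  let C (i : ℕ) : Submodule k A := Submodule.map₂ LinearMap.id (p ^ i) I
  have hC (i : ℕ) : ∀ x ∈ I, ∀ y ∈ C i, x * y ∈ C (i + 1) := by
    intro x hx
    suffices C i ≤ (C (i + 1)).comap (LinearMap.mul k A x) from fun y hy ↦ this hy
    refine Submodule.map₂_le.mpr fun w hw v hv ↦ ?_
    have hxw : LinearMap.mul k A x * w ∈ p ^ (i + 1) := by
      rw [pow_succ']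
      exact Submodule.mul_mem_mul (Submodule.mem_map_of_mem hx) hw
    have h := Submodule.apply_mem_map₂ (LinearMap.id : Module.End k A →ₗ[k] Module.End k A) hxw hv
    exact h
  have hle (i : ℕ) : ∀ m, 2 ^ i ≤ m + 1 → iser k A I m ≤ C i := by
    induction i with
    | zero =>
      intro m _ y hy
      have h1 : (1 : Module.End k A) ∈ p ^ 0 := by
        rw [pow_zero]
        exact Submodule.one_le.mp le_rfl
      exact Submodule.apply_mem_map₂ LinearMap.id h1 (iser_le_self hI m hy)
    | succ i ih =>
      intro m hm
      have hpos := Nat.one_le_two_pow (n := i)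
      rw [pow_succ] at hm
      obtain ⟨m, rfl⟩ : ∃ l, m = l + 1 := ⟨m - 1, by omega⟩
      rw [iser]
      refine iSup_le fun j ↦ Submodule.span_le.mpr ?_
      rintro _ ⟨x, hx, y, hy, rfl⟩
      have hj := j.2
      by_cases h : 2 ^ i ≤ j.1 + 1
      · rw [mul_comm]
        exact hC i y (iser_le_self hI _ hy) x (ih _ h hx)
      · exact hC i x (iser_le_self hI _ hx) y (ih _ (by omega) hy)
  refine ⟨2 ^ n, eq_bot_iff.mpr ((hle n _ (Nat.le_succ _)).trans ?_)⟩
  simp only [C, hn, Submodule.map₂_bot_left, le_refl]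

/-- The trace form of the regular representation of a semisimple Jordan algebra is
nondegenerate. -/
theorem eq_zero_of_forall_trace_mul_eq_zero [CharZero k] [IsCommJordan A] [FiniteDimensional k A]
    (hss : ∀ I : Submodule k A, (∀ x : A, ∀ i ∈ I, x * i ∈ I) →
      (∃ n : ℕ, iser k A I n = ⊥) → I = ⊥) {x : A}
    (hx : ∀ y : A, LinearMap.trace k A (LinearMap.mul k A (x * y)) = 0) : x = 0 := by
  let N : Submodule k A :=
    { carrier := {x | ∀ y : A, LinearMap.trace k A (LinearMap.mul k A (x * y)) = 0}
      zero_mem' := fun y ↦ by simp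
      add_mem' := fun hx hy z ↦ by rw [add_mul, map_add, map_add, hx z, hy z, add_zero]
      smul_mem' := fun t x hx z ↦ by rw [smul_mul_assoc, map_smul, map_smul, hx z, smul_zero] }
  have hideal : ∀ z : A, ∀ y ∈ N, z * y ∈ N := by
    intro z y hy w
    rw [trace_mul_assoc, mul_comm]
    exact hy _
  obtain ⟨n, hn⟩ := exists_pow_eq_bot_of_lieTriple (p := N.map (LinearMap.mul k A)) (by
      rintro _ ⟨y, hy, rfl⟩
      exact isNilpotent_mul_of_trace_eq_zero hideal (fun z hz ↦ hz) hy) (by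
      rintro _ ⟨a, ha, rfl⟩ _ ⟨b, hb, rfl⟩ _ ⟨c, hc, rfl⟩
      exact ⟨_, sub_mem (mul_comm c (a * b) ▸ hideal c _ (hideal a b hb))
        (mul_comm b (a * c) ▸ hideal b _ (hideal a c hc)), (lie_lie_mul a b c).symm⟩)
  have hN : N = ⊥ := hss N hideal (exists_iser_eq_bot hideal hn)
  exact (Submodule.eq_bot_iff N).mp hN x hx

end Nilpotency

/-- a Jordan algebra `J` is semisimple (its only nilpotent ideal is `{0}`)
iff it admits a finite-dimensional representation whose trace form `(x, y) ↦ tr(π(xy))`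
is nondegenerate.  (Every finite-dimensional vector space is isomorphic to some
`Fin n → K`, and the trace form is invariant under such an isomorphism.) -/
theorem semisimple_iff_exists_rep_with_nondegenerate_trace_form
    {K : Type*} [Field K] [CharZero K]
    {J : Type*} [NonUnitalNonAssocCommRing J] [Module K J]
    [SMulCommClass K J J] [IsScalarTower K J J] [FiniteDimensional K J]
    (hjordan : ∀ x y : J, (x * y) * (x * x) = x * (y * (x * x))) :
    -- `J` is semisimple: every nilpotent ideal of `J` is zero
    (∀ I : Submodule K J, (∀ x : J, ∀ i ∈ I, x * i ∈ I) →
        (∃ n : ℕ, iser K J I n = ⊥) → I = ⊥) ↔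
      -- iff there is a finite-dimensional representation with nondegenerate trace form
      (∃ (n : ℕ) (π : J →ₗ[K] Module.End K (Fin n → K)),
        (∀ x : J, π (x * x) * π x = π x * π (x * x)) ∧
        (∀ x y : J,
          2 • (π (x * y) * π x) + π (x * x) * π y - 2 • (π x * (π y * π x)) -
              π ((x * x) * y) = 0) ∧
        (∀ x : J,
          (∀ y : J, LinearMap.trace K (Fin n → K) (π (x * y)) = 0) → x = 0)) := by
  have : IsCommJordan J := ⟨hjordan⟩
  constructor
  · intro hss
    let e : J ≃ₗ[K] (Fin (Module.finrank K J) → K) := (Module.finBasis K J).equivFun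
    have hmul (f g : Module.End K J) : e.conj (f * g) = e.conj f * e.conj g := e.conj_comp g f
    refine ⟨Module.finrank K J, e.conj.toLinearMap.comp (LinearMap.mul K J), fun x ↦ ?_,
      fun x y ↦ ?_, fun x hx ↦ ?_⟩
    · have h := congrArg e.conj (isJordanRep_mul (k := K) (A := J) |>.commute_sq x)
      rwa [hmul, hmul] at h
    · have h := congrArg e.conj (isJordanRep_mul (k := K) (A := J) |>.quadratic x y)
      rwa [map_sub, map_sub, map_add, map_nsmul, map_nsmul, hmul, hmul, hmul, hmul, map_zero] at h
    · refine eq_zero_of_forall_trace_mul_eq_zero hss fun y ↦ ?_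
      rw [← hx y]
      exact (LinearMap.trace_conj' _ e).symm
  · rintro ⟨n, π, hcomm, hquad, hnondeg⟩ I hI ⟨m, hm⟩
    have hπ : IsJordanRep π := ⟨hcomm, hquad⟩
    refine (Submodule.eq_bot_iff I).mpr fun x hx ↦ hnondeg x fun y ↦ ?_
    have hmem := jpow_mem_iser (k := K) (mul_comm y x ▸ hI y x hx) m
    rw [hm, Submodule.mem_bot] at hmem
    exact hπ.trace_map_eq_zero hmem
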